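/- Let H and F be graphs with chromatic numbers r+1 and s+1 respectively, where r > s ≥ 1, and suppose F is a complete (s+1)-partite graph. Then for every ε > 0 there exists N such that for all n ≥ N, every n-vertex graph with at least (1 - 1/s + ε)·C(n,2) edges contains either a copy of H as a subgraph or an induced copy of F. Equivalently, ex(n, {H, F-ind}) ≤ (1 - 1/s + ε)·C(n,2) for all sufficiently large n. -/

import Mathlib

open SimpleGraph Filter

/-- `G` contains a (not necessarily induced) copy of `H`: an injective graph homomorphism. -/
def ContainsCopy {α β : Type*} (H : SimpleGraph α) (G : SimpleGraph β) : Prop :=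
  ∃ f : H →g G, Function.Injective f

/-- `G` contains an induced copy of `F`: a graph embedding. -/
def ContainsInducedCopy {α β : Type*} (F : SimpleGraph α) (G : SimpleGraph β) : Prop :=
  Nonempty (F ↪g G)

/-- The induced Turán number `ex(n, {H, F-ind})`: the maximum number of edges in an
`n`-vertex graph with no copy of `H` and no induced copy of `F`. -/
noncomputable def inducedTuranNumber {α β : Type*} (H : SimpleGraph α) (F : SimpleGraph β)
    (n : ℕ) : ℕ :=
  sSup {m | ∃ G : SimpleGraph (Fin n),
    ¬ ContainsCopy H G ∧ ¬ ContainsInducedCopy F G ∧ m = G.edgeSet.ncard}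

/-- A graph is complete multipartite if its vertices can be assigned to parts so that
two vertices are adjacent iff they lie in different parts. -/
def IsCompleteMultipartite {α : Type*} (G : SimpleGraph α) : Prop :=
  ∃ (ι : Type) (f : α → ι), ∀ a b, G.Adj a b ↔ f a ≠ f b

/-- A graph is complete `k`-partite if its vertices can be partitioned into `k` (nonempty)
parts so that two vertices are adjacent iff they lie in different parts. -/
def IsCompleteMultipartiteWith {α : Type*} (G : SimpleGraph α) (k : ℕ) : Prop :=
  ∃ f : α → Fin k, Function.Surjective f ∧ ∀ a b, G.Adj a b ↔ f a ≠ f b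

open Finset in
theorem aux_ramsey (a b : ℕ) : ∃ N : ℕ, ∀ {V : Type} [DecidableEq V] (G : SimpleGraph V)
    (S : Finset V), N ≤ #S →
    (∃ T ⊆ S, #T = a ∧ G.IsClique (T : Set V)) ∨ (∃ T ⊆ S, #T = b ∧ G.IsIndepSet (T : Set V)) := by
  classical
  induction a generalizing b with
  | zero => exact ⟨0, fun G S _ => Or.inl ⟨∅, by simp, by simp, by simp⟩⟩
  | succ a iha =>
    induction b with
    | zero => exact ⟨0, fun G S _ => Or.inr ⟨∅, by simp, by simp, by simp⟩⟩
    | succ b ihb =>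
      obtain ⟨N1, h1⟩ := iha (b + 1)
      obtain ⟨N2, h2⟩ := ihb
      refine ⟨N1 + N2 + 1, fun {V} _ G S hS => ?_⟩
      obtain ⟨v, hv⟩ : S.Nonempty := Finset.card_pos.mp (by omega)
      have hc := Finset.card_filter_add_card_filter_not (s := S.erase v) (fun w => G.Adj v w)
      rw [Finset.card_erase_of_mem hv] at hc
      have hsub : ∀ (p : V → Prop) [DecidablePred p], (S.erase v).filter p ⊆ S := fun p _ =>
        (Finset.filter_subset _ _).trans (Finset.erase_subset _ _)
      rcases (show N1 ≤ #((S.erase v).filter (fun w => G.Adj v w)) ∨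
        N2 ≤ #((S.erase v).filter (fun w => ¬ G.Adj v w)) by omega) with h | h
      · rcases h1 G _ h with ⟨T, hT, hc, hcl⟩ | ⟨T, hT, hc, hcl⟩
        · left
          refine ⟨insert v T, Finset.insert_subset hv (hT.trans (hsub _)), ?_, ?_⟩
          · rw [Finset.card_insert_of_notMem, hc]
            intro hvT
            simpa using hT hvT
          · rw [Finset.coe_insert]
            refine hcl.insert fun w hw _ => ?_
            have := hT hw
            simp only [Finset.mem_filter] at this
            exact this.2
        · exact Or.inr ⟨T, hT.trans (hsub _), hc, hcl⟩
      · rcases h2 G _ h with ⟨T, hT, hc, hcl⟩ | ⟨T, hT, hc, hcl⟩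
        · exact Or.inl ⟨T, hT.trans (hsub _), hc, hcl⟩
        · right
          refine ⟨insert v T, Finset.insert_subset hv (hT.trans (hsub _)), ?_, ?_⟩
          · rw [Finset.card_insert_of_notMem, hc]
            intro hvT
            simpa using hT hvT
          · rw [Finset.coe_insert]
            refine Set.Pairwise.insert hcl fun w hw _ => ?_
            have := hT hw
            simp only [Finset.mem_filter] at this
            exact ⟨this.2, fun h => this.2 h.symm⟩

theorem aux_minDegree (c : ℝ) (hc : 0 ≤ c) (m0 : ℕ) (n : ℕ) : ∀ (G : SimpleGraph (Fin n)),
    c * ((n + 1).choose 2 : ℝ) + (m0.choose 2 : ℝ) < (G.edgeSet.ncard : ℝ) →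
    ∃ (m : ℕ) (_ : m0 ≤ m) (G' : SimpleGraph (Fin m)) (_ : DecidableRel G'.Adj),
      Nonempty (G' ↪g G) ∧ c * m ≤ (G'.minDegree : ℝ) := by
  classical
  have key : ∀ (k : ℕ) (G : SimpleGraph (Fin k)), G.edgeSet.ncard = G.edgeFinset.card := by
    intro k G
    rw [← SimpleGraph.coe_edgeFinset, Set.ncard_coe_finset]
  induction n with
  | zero =>
    intro G h
    exfalso
    have h1 := G.card_edgeFinset_le_card_choose_two
    rw [key] at h
    rw [Fintype.card_fin, Nat.choose_zero_succ] at h1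
    rw [Nat.le_zero.mp h1] at h
    have : 0 ≤ (m0.choose 2 : ℝ) := by positivity
    simp only [Nat.cast_zero] at h
    have : 0 ≤ c * ((0 + 1).choose 2 : ℝ) := by positivity
    linarith
  | succ n ih =>
    intro G h
    by_cases hm : n + 1 < m0
    · exfalso
      have h1 := G.card_edgeFinset_le_card_choose_two
      rw [key] at h
      rw [Fintype.card_fin] at h1
      have h2 : (n+1).choose 2 ≤ m0.choose 2 := Nat.choose_le_choose 2 hm.le
      have h3 : (G.edgeFinset.card : ℝ) ≤ m0.choose 2 := by exact_mod_cast h1.trans h2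
      have : 0 ≤ c * (((n + 1 + 1).choose 2 : ℕ) : ℝ) := by positivity
      linarith
    · push Not at hm
      by_cases hd : c * ((n + 1 : ℕ) : ℝ) ≤ (G.minDegree : ℝ)
      · exact ⟨n + 1, hm, G, inferInstance, ⟨SimpleGraph.Embedding.refl⟩, hd⟩
      · push Not at hd
        obtain ⟨v, hv⟩ := G.exists_minimal_degree_vertex
        have hcard : Fintype.card (({v}ᶜ : Set (Fin (n+1)))) = n := by
          rw [Fintype.card_compl_set]; simp
        let I := (G.induce {v}ᶜ).overFinIso hcard
        have hcd : ((G.induce {v}ᶜ).overFin hcard).edgeFinset.card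
            = G.edgeFinset.card - G.degree v := by
          rw [← I.card_edgeFinset_eq, ← SimpleGraph.card_edgeFinset_deleteIncidenceSet,
            ← SimpleGraph.card_edgeFinset_induce_compl_singleton]
        obtain ⟨m, hm, G', i, ⟨e⟩, h'⟩ := ih ((G.induce {v}ᶜ).overFin hcard) (by
          rw [key] at h ⊢
          rw [hcd]
          have h1 : (G.edgeFinset.card : ℝ) ≤
            ((G.edgeFinset.card - G.degree v : ℕ) : ℝ) + G.degree v := by
            exact_mod_cast (show _ ≤ _ by omega)
          have h2 : (n + 1 + 1).choose 2 = (n + 1) + (n + 1).choose 2 := by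
            rw [Nat.choose_succ_succ' (n+1) 1]; simp
          rw [h2] at h
          rw [hv] at hd
          push_cast at h hd ⊢
          nlinarith)
        exact ⟨m, hm, G', i, ⟨(SimpleGraph.Embedding.induce _).comp
          (I.symm.toEmbedding.comp e)⟩, h'⟩

theorem aux_main {α β : Type*} [Fintype α] [Fintype β] (H : SimpleGraph α) (F : SimpleGraph β)
    (s : ℕ) (hs : 1 ≤ s)
    (hFmp : IsCompleteMultipartiteWith F (s + 1)) (ε : ℝ) (hε : 0 < ε) :
    ∃ N : ℕ, ∀ n : ℕ, N ≤ n →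
      (∀ G : SimpleGraph (Fin n),
        (1 - 1 / (s : ℝ) + ε) * (n.choose 2 : ℝ) ≤ (G.edgeSet.ncard : ℝ) →
        ContainsCopy H G ∨ ContainsInducedCopy F G) := by
  classical
  obtain ⟨t, ht⟩ := aux_ramsey (Fintype.card α) (Fintype.card β)
  have hES := SimpleGraph.eventually_completeEquipartiteGraph_isContained_of_minDegree
    (half_pos hε) s t
  obtain ⟨m0, hm0⟩ := Filter.eventually_atTop.mp hES
  have hs1 : 1 / (s : ℝ) ≤ 1 := by
    rw [div_le_one (by positivity)]; exact_mod_cast hs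
  set c : ℝ := 1 - 1 / (s : ℝ) + ε / 2 with hc
  have hc0 : 0 ≤ c := by linarith
  -- large n
  obtain ⟨N, hN⟩ := exists_nat_gt (4 * (c + m0.choose 2) / ε + 1)
  have hNpos : 0 < N := by
    have : (0 : ℝ) < N := lt_of_le_of_lt (by positivity) hN
    exact_mod_cast this
  refine ⟨N, fun n hn G hG => ?_⟩
  have hlarge : c * ((n + 1).choose 2 : ℝ) + (m0.choose 2 : ℝ) < (G.edgeSet.ncard : ℝ) := by
    refine lt_of_lt_of_le ?_ hG
    have hn1 : (1 : ℝ) ≤ n := by exact_mod_cast hNpos.trans_le hn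
    have hnN : (N : ℝ) ≤ n := by exact_mod_cast hn
    have h2 : (n + 1).choose 2 = n + n.choose 2 := by
      rw [Nat.choose_succ_succ' n 1]; simp
    rw [h2]
    push_cast
    rw [show 1 - 1 / (s : ℝ) + ε = c + ε / 2 by rw [hc]; ring]
    have h3 : (n.choose 2 : ℝ) = n * (n - 1) / 2 := Nat.cast_choose_two ℝ n
    have h4 : 4 * (c + m0.choose 2) < ε * (n - 1) := by
      have : 4 * (c + m0.choose 2) / ε < n - 1 := by linarith
      rw [div_lt_iff₀ hε] at this
      linarith
    have h5 : (0 : ℝ) ≤ m0.choose 2 := by positivity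
    have h6 : (m0.choose 2 : ℝ) ≤ m0.choose 2 * n := le_mul_of_one_le_right h5 hn1
    have h7 : 4 * (c + m0.choose 2) * n < ε * (n - 1) * n := by
      apply mul_lt_mul_of_pos_right h4; linarith
    have h8 : (c + ε / 2) * (n.choose 2 : ℝ) = c * n.choose 2 + ε * (n - 1) * n / 4 := by
      rw [add_mul]; nth_rewrite 2 [h3]; ring
    rw [h8, mul_add]
    linarith
  obtain ⟨m, hm, G', i, ⟨e⟩, hmin⟩ := aux_minDegree c hc0 m0 n G hlarge
  obtain ⟨f⟩ := hm0 m hm (G := G') hmin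
  -- work inside G
  let g : Fin (s + 1) × Fin t → Fin n := fun x => e (f x)
  have hginj : Function.Injective g := e.injective.comp f.injective
  have hgadj : ∀ x y, x.1 ≠ y.1 → G.Adj (g x) (g y) := fun x y hxy =>
    e.map_rel_iff.mpr (f.toHom.map_rel hxy)
  let P : Fin (s + 1) → Finset (Fin n) := fun i => Finset.univ.image (fun j => g (i, j))
  have hP : ∀ i, t ≤ (P i).card := fun i => by
    rw [Finset.card_image_of_injective _ (fun a b hab => by simpa using hginj hab)]
    simp
  have hPadj : ∀ i j, i ≠ j → ∀ x ∈ P i, ∀ y ∈ P j, G.Adj x y := by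
    intro i j hij x hx y hy
    simp only [P, Finset.mem_image, Finset.mem_univ, true_and] at hx hy
    obtain ⟨a, rfl⟩ := hx
    obtain ⟨b, rfl⟩ := hy
    exact hgadj _ _ hij
  by_cases hcl : ∃ i, ∃ T ⊆ P i, T.card = Fintype.card α ∧ G.IsClique (T : Set (Fin n))
  · obtain ⟨i, T, -, hTc, hT⟩ := hcl
    left
    have : Fintype.card α = Fintype.card T := by simp [hTc]
    let φ := Fintype.equivOfCardEq this
    refine ⟨⟨fun a => (φ a : Fin n), fun {a b} hab => hT (φ a).2 (φ b).2 ?_⟩, ?_⟩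
    · exact fun h => hab.ne (φ.injective (Subtype.ext h))
    · exact fun a b h => φ.injective (Subtype.ext h)
  · right
    have hind : ∀ i, ∃ T ⊆ P i, T.card = Fintype.card β ∧ G.IsIndepSet (T : Set (Fin n)) :=
      fun i => (ht G (P i) (hP i)).resolve_left (fun h => hcl ⟨i, h⟩)
    choose T hTP hTc hT using hind
    obtain ⟨p, -, hp⟩ := hFmp
    have hcard : ∀ i, Fintype.card β = Fintype.card (T i) := fun i => by simp [hTc]
    let φ := fun i => Fintype.equivOfCardEq (hcard i)
    let ψ : β → Fin n := fun b => (φ (p b) b : Fin n)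
    have hψ : ∀ b, ψ b ∈ T (p b) := fun b => (φ (p b) b).2
    have hne : ∀ a b, p a ≠ p b → G.Adj (ψ a) (ψ b) := fun a b hab =>
      hPadj _ _ hab _ (hTP _ (hψ a)) _ (hTP _ (hψ b))
    have hinj : Function.Injective ψ := by
      intro a b hab
      by_cases h : p a = p b
      · have haux : ∀ i j, i = j → ((φ i a : Fin n)) = (φ j b : Fin n) → a = b := by
          rintro i j rfl h'
          exact (φ i).injective (Subtype.ext h')
        exact haux _ _ h hab
      · exact absurd hab (hne a b h).ne
    refine ⟨⟨⟨ψ, hinj⟩, fun {a b} => ?_⟩⟩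
    rw [hp]
    refine ⟨fun hadj h => ?_, hne a b⟩
    have ha := hψ a
    rw [h] at ha
    exact hT (p b) ha (hψ b) hadj.ne hadj

/-- If `χ(H) = r+1`, `χ(F) = s+1`, `r > s ≥ 1` and `F` is complete `(s+1)`-partite, then for
every `ε > 0` and all sufficiently large `n`, every `n`-vertex graph with at least
`(1 - 1/s + ε) * C(n,2)` edges contains a copy of `H` or an induced copy of `F`;
equivalently, `ex(n, {H, F-ind}) ≤ (1 - 1/s + ε) * C(n,2)`. -/
theorem inducedTuran_upper_bound
    {α β : Type*} [Fintype α] [Fintype β] (H : SimpleGraph α) (F : SimpleGraph β)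
    (r s : ℕ) (hs : 1 ≤ s) (hsr : s < r)
    (hH : H.chromaticNumber = (r + 1 : ℕ)) (hF : F.chromaticNumber = (s + 1 : ℕ))
    (hFmp : IsCompleteMultipartiteWith F (s + 1)) :
    ∀ ε : ℝ, 0 < ε → ∃ N : ℕ, ∀ n : ℕ, N ≤ n →
      (∀ G : SimpleGraph (Fin n),
        (1 - 1 / (s : ℝ) + ε) * (n.choose 2 : ℝ) ≤ (G.edgeSet.ncard : ℝ) →
        ContainsCopy H G ∨ ContainsInducedCopy F G) ∧
      (inducedTuranNumber H F n : ℝ) ≤ (1 - 1 / (s : ℝ) + ε) * (n.choose 2 : ℝ) := by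
  intro ε hε
  obtain ⟨N, hN⟩ := aux_main H F s hs hFmp ε hε
  refine ⟨N, fun n hn => ⟨hN n hn, ?_⟩⟩
  have hs1 : 1 / (s : ℝ) ≤ 1 := by
    rw [div_le_one (by positivity)]; exact_mod_cast hs
  have h0 : 0 ≤ (1 - 1 / (s : ℝ) + ε) * (n.choose 2 : ℝ) :=
    mul_nonneg (by linarith) (by positivity)
  rw [← Nat.le_floor_iff h0]
  refine csSup_le' ?_
  rintro m ⟨G, h1, h2, rfl⟩
  rw [Nat.le_floor_iff h0]
  by_contra hlt
  push Not at hlt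
  rcases hN n hn G hlt.le with h | h
  · exact h1 h
  · exact h2 h
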